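/- Let σ > 0, ρ ∈ (0,1), and let Z₁, Z₂ be independent standard Gaussian random variables; set X_s := σ Z₁ and X_t := σ(ρ Z₁ + √(1−ρ²) Z₂), so that (X_s, X_t) is a centred bivariate Gaussian vector with common variance σ² and correlation ρ. Let h : ℝ → ℝ be strictly increasing and continuous, satisfy condition [A₋] with parameter b₋ > 0, and satisfy h(x)/h(−x) → 0 as x → +∞. Then P(h(X_t) − h(X_s) > y) / P(h(X_t) ≤ −y) → 1 as y → ∞; in particular the right tail of the increment h(X_t) − h(X_s) is regularly varying at infinity with the same index −β₋ = −1/(2 b₋ σ²) as the left tail of the distribution of h(X_t). -/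

import Mathlib

open MeasureTheory ProbabilityTheory Filter Real Set

/-!
An increment `h (X_t) - h (X_s) > y` with `y` large comes from a very negative `h (X_s)`. Indeed
`h (X_t) > ε y` is negligible because the right tail of `h` is dominated by its left tail, and
`h (X_s), h (X_t) ≤ -ε y` is jointly negligible because the lower tails of a Gaussian pair with
correlation less than `1` are asymptotically independent. Letting `ε → 0` costs nothing since the
left tail is regularly varying: if `W y` is the generalized inverse of `h` at `-y`, then
`P(h (X_s) ≤ -y) = P(X_s ≤ W y)`, where `b (W y)² + f (W y) = log y + o(1)`. As `f'(x) = o(x)`,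
this gives `(W (l y))² - (W y)² → (log l) / b`, and Mills' ratio turns it into
`P(X_s ≤ W (l y)) / P(X_s ≤ W y) → l ^ (-1 / (2 b σ²))`.
-/

open Asymptotics
open scoped Topology NNReal

/-- Regular variation at infinity with index `α`, for functions that are positive for all large
arguments. -/
structure IsRegularlyVarying (F : ℝ → ℝ) (α : ℝ) : Prop where
  eventually_pos : ∀ᶠ y in atTop, 0 < F y
  tendsto_div : ∀ l : ℝ, 0 < l → Tendsto (fun y => F (l * y) / F y) atTop (𝓝 (l ^ α))

namespace IsRegularlyVarying

variable {F G R T : ℝ → ℝ} {α : ℝ}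

lemma congr_isEquivalent (hF : IsRegularlyVarying F α) (hGF : G ~[atTop] F) :
    IsRegularlyVarying G α where
  eventually_pos := hGF.eventually_pos hF.eventually_pos
  tendsto_div l hl := by
    have hmul : Tendsto (fun y : ℝ => l * y) atTop atTop := tendsto_id.const_mul_atTop hl
    exact ((hGF.comp_tendsto hmul).div hGF).symm.tendsto_nhds (hF.tendsto_div l hl)

lemma isLittleO_comp_const_mul (hF : IsRegularlyVarying F α) (hR : R =o[atTop] F) {l : ℝ}
    (hl : 0 < l) : (fun y => R (l * y)) =o[atTop] F := by
  have hmul : Tendsto (fun y : ℝ => l * y) atTop atTop := tendsto_id.const_mul_atTop hl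
  have hFl : (fun y => F (l * y)) =O[atTop] F :=
    isBigO_of_div_tendsto_nhds (hF.eventually_pos.mono fun y hy h0 => absurd h0 hy.ne') _
      (hF.tendsto_div l hl)
  exact (hR.comp_tendsto hmul).trans_isBigO hFl

lemma isLittleO_of_eventually_le (hF : IsRegularlyVarying F α) (hα : α < 0)
    (hR : ∀ y, 0 ≤ R y) (hRF : ∀ K : ℝ, 0 < K → ∀ᶠ y in atTop, R y ≤ F (K * y)) :
    R =o[atTop] F := by
  refine isLittleO_iff.2 fun c hc => ?_
  obtain ⟨K, hKc, hK⟩ : ∃ K : ℝ, K ^ α < c ∧ 0 < K := by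
    have hpow := tendsto_rpow_neg_atTop (neg_pos.2 hα)
    rw [neg_neg] at hpow
    exact ((hpow.eventually_lt_const hc).and (eventually_gt_atTop 0)).exists
  filter_upwards [(hF.tendsto_div K hK).eventually_lt_const hKc, hRF K hK, hF.eventually_pos]
    with y hratio hle hpos
  rw [norm_of_nonneg (hR y), norm_of_nonneg hpos.le]
  exact hle.trans ((div_lt_iff₀ hpos).1 hratio).le

lemma isEquivalent_of_sandwich (hF : IsRegularlyVarying F α) (hR : R =o[atTop] F)
    (hlower : ∀ ε ∈ Ioo (0 : ℝ) 1, ∀ᶠ y in atTop, F ((1 + ε) * y) - R (ε * y) ≤ T y)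
    (hupper : ∀ ε ∈ Ioo (0 : ℝ) 1, ∀ᶠ y in atTop, T y ≤ F ((1 - ε) * y) + R (ε * y)) :
    T ~[atTop] F := by
  have hRdiv : ∀ ε : ℝ, 0 < ε → Tendsto (fun y => R (ε * y) / F y) atTop (𝓝 0) :=
    fun ε hε => (hF.isLittleO_comp_const_mul hR hε).tendsto_div_nhds_zero
  have hmem : ∀ᶠ ε : ℝ in 𝓝[>] 0, ε ∈ Ioo (0 : ℝ) 1 := Ioo_mem_nhdsGT one_pos
  have hpow : ∀ k : ℝ, Tendsto (fun ε : ℝ => (1 + k * ε) ^ α) (𝓝[>] 0) (𝓝 1) := fun k => by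
    have hcont : ContinuousAt (fun ε : ℝ => (1 + k * ε) ^ α) 0 :=
      ContinuousAt.rpow_const (by fun_prop) (Or.inl (by simp))
    simpa [ContinuousAt] using hcont.tendsto.mono_left nhdsWithin_le_nhds
  rw [isEquivalent_iff_tendsto_one (hF.eventually_pos.mono fun _ hy => hy.ne'), tendsto_order]
  constructor
  · intro a ha
    obtain ⟨ε, hεa, hε⟩ := (((hpow 1).eventually_const_lt ha).and hmem).exists
    rw [one_mul] at hεa
    have hlim : Tendsto (fun y => (F ((1 + ε) * y) - R (ε * y)) / F y) atTop
        (𝓝 ((1 + ε) ^ α)) := by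
      simpa only [sub_div, sub_zero] using
        (hF.tendsto_div (1 + ε) (by linarith [hε.1])).sub (hRdiv ε hε.1)
    filter_upwards [hlim.eventually_const_lt hεa, hlower ε hε, hF.eventually_pos]
      with y hay hle hpos
    exact hay.trans_le (div_le_div_of_nonneg_right hle hpos.le)
  · intro a ha
    obtain ⟨ε, hεa, hε⟩ := (((hpow (-1)).eventually_lt_const ha).and hmem).exists
    rw [neg_one_mul, ← sub_eq_add_neg] at hεa
    have hlim : Tendsto (fun y => (F ((1 - ε) * y) + R (ε * y)) / F y) atTop
        (𝓝 ((1 - ε) ^ α)) := by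
      simpa only [add_div, add_zero] using
        (hF.tendsto_div (1 - ε) (by linarith [hε.2])).add (hRdiv ε hε.1)
    filter_upwards [hlim.eventually_lt_const hεa, hupper ε hε, hF.eventually_pos]
      with y hay hle hpos
    exact (div_le_div_of_nonneg_right hle hpos.le).trans_lt hay

end IsRegularlyVarying

section IncrementTail

variable {Ω : Type*} [MeasurableSpace Ω] {μ : Measure Ω} [IsFiniteMeasure μ]

theorem isEquivalent_measureReal_increment_gt {X Y : Ω → ℝ} {α : ℝ}
    (hX : IsRegularlyVarying (fun y => μ.real {ω | X ω ≤ -y}) α)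
    (hY : (fun y => μ.real {ω | y < Y ω}) =o[atTop] fun y => μ.real {ω | X ω ≤ -y})
    (hXY : (fun y => μ.real {ω | X ω ≤ -y ∧ Y ω ≤ -y}) =o[atTop]
      fun y => μ.real {ω | X ω ≤ -y}) :
    (fun y => μ.real {ω | Y ω - X ω > y}) ~[atTop] fun y => μ.real {ω | X ω ≤ -y} := by
  refine hX.isEquivalent_of_sandwich (hXY.add hY) (fun ε _ => ?_) fun ε _ => ?_
  · filter_upwards [eventually_ge_atTop 0] with y hy
    have hcover : {ω | X ω ≤ -((1 + ε) * y)} ⊆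
        {ω | Y ω - X ω > y} ∪ {ω | X ω ≤ -(ε * y) ∧ Y ω ≤ -(ε * y)} := by
      intro ω (hω : X ω ≤ -((1 + ε) * y))
      rcases le_or_gt (Y ω) (-(ε * y)) with hle | hgt
      · exact Or.inr ⟨by linarith, hle⟩
      · exact Or.inl (show y < Y ω - X ω by linarith)
    have hbound := (measureReal_mono hcover (μ := μ)).trans (measureReal_union_le _ _)
    have hnonneg : 0 ≤ μ.real {ω | ε * y < Y ω} := measureReal_nonneg
    linarith
  · refine Eventually.of_forall fun y => ?_
    have hcover : {ω | Y ω - X ω > y} ⊆ {ω | X ω ≤ -((1 - ε) * y)} ∪ {ω | ε * y < Y ω} := by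
      intro ω (hω : y < Y ω - X ω)
      rcases le_or_gt (Y ω) (ε * y) with hle | hgt
      · exact Or.inl (show X ω ≤ -((1 - ε) * y) by linarith)
      · exact Or.inr hgt
    have hbound := (measureReal_mono hcover (μ := μ)).trans (measureReal_union_le _ _)
    have hnonneg : 0 ≤ μ.real {ω | X ω ≤ -(ε * y) ∧ Y ω ≤ -(ε * y)} := measureReal_nonneg
    linarith

end IncrementTail

section LowerTail

variable {Ω : Type*} [MeasurableSpace Ω] {μ : Measure Ω} {X Z : Ω → ℝ}

lemma measureReal_le_eq_cdf {ν : Measure ℝ} [IsProbabilityMeasure ν] (hX : HasLaw X ν μ) (x : ℝ) :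
    μ.real {ω | X ω ≤ x} = cdf ν x := by
  rw [cdf_eq_real]
  exact hX.measureReal_eq measurableSet_Iic

lemma tendsto_measureReal_le_atBot [IsProbabilityMeasure μ] (hZ : AEMeasurable Z μ) :
    Tendsto (fun x => μ.real {ω | Z ω ≤ x}) atBot (𝓝 0) := by
  have := Measure.isProbabilityMeasure_map hZ
  simpa only [measureReal_le_eq_cdf ⟨hZ, rfl⟩] using tendsto_cdf_atBot (μ.map Z)

lemma exists_le_mul_or_le_mul {ρ s a : ℝ} (hρ : ρ < 1) (hρa : ρ * a < 1) (hs : 0 ≤ s) :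
    ∃ κ : ℝ, 0 < κ ∧
      ∀ x < 0, ∀ p q, p ≤ x → ρ * p + s * q ≤ x → p ≤ a * x ∨ q ≤ κ * x := by
  set κ : ℝ := (1 - max ρ (ρ * a)) / (s + 1) with hκdef
  have hκ : 0 < κ := div_pos (sub_pos.2 (max_lt hρ hρa)) (by linarith)
  refine ⟨κ, hκ, fun x hx p q hp hpq => or_iff_not_imp_left.2 fun hnear => ?_⟩
  have hρp : max ρ (ρ * a) * x ≤ ρ * p := by
    rcases le_total 0 ρ with h0 | h0
    · nlinarith [le_max_right ρ (ρ * a)]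
    · nlinarith [le_max_left ρ (ρ * a)]
  have hκx : (s + 1) * (κ * x) = (1 - max ρ (ρ * a)) * x := by
    rw [hκdef]; field_simp
  nlinarith [mul_neg_of_pos_of_neg hκ hx]

lemma isLittleO_measureReal_joint_le_atBot [IsProbabilityMeasure μ] {ρ s : ℝ} (hρ : ρ < 1)
    (hs : 0 ≤ s) (hZ : AEMeasurable Z μ) (hindep : IndepFun X Z μ)
    (hX : ∀ a : ℝ, 1 < a →
      (fun x => μ.real {ω | X ω ≤ a * x}) =o[atBot] fun x => μ.real {ω | X ω ≤ x}) :
    (fun x => μ.real {ω | X ω ≤ x ∧ ρ * X ω + s * Z ω ≤ x}) =o[atBot]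
      fun x => μ.real {ω | X ω ≤ x} := by
  obtain ⟨a, hρa, ha⟩ : ∃ a : ℝ, ρ * a < 1 ∧ 1 < a := by
    have hlim : Tendsto (fun a : ℝ => ρ * a) (𝓝[>] 1) (𝓝 ρ) := by
      simpa using ((continuous_const_mul ρ).tendsto 1).mono_left nhdsWithin_le_nhds
    exact ((hlim.eventually_lt_const hρ).and self_mem_nhdsWithin).exists
  -- Outside the negligible event `X ≤ a * x` the second constraint forces `Z ≤ κ * x`, which is
  -- independent of `X` and has vanishing probability.
  obtain ⟨κ, hκ, hsplit⟩ := exists_le_mul_or_le_mul hρ hρa hs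
  have hcover : ∀ x < 0, {ω | X ω ≤ x ∧ ρ * X ω + s * Z ω ≤ x} ⊆
      {ω | X ω ≤ a * x} ∪ X ⁻¹' Iic x ∩ Z ⁻¹' Iic (κ * x) := fun x hx ω hω =>
    (hsplit x hx _ _ hω.1 hω.2).imp id fun hZω => ⟨hω.1, hZω⟩
  have hprod : ∀ x, μ.real (X ⁻¹' Iic x ∩ Z ⁻¹' Iic (κ * x)) =
      μ.real {ω | Z ω ≤ κ * x} * μ.real {ω | X ω ≤ x} := fun x => by
    simp only [measureReal_def, hindep.measure_inter_preimage_eq_mul _ _ measurableSet_Iic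
      measurableSet_Iic, ENNReal.toReal_mul]
    exact mul_comm _ _
  have hZκ : (fun x => μ.real {ω | Z ω ≤ κ * x}) =o[atBot] fun _ => (1 : ℝ) :=
    (isLittleO_one_iff ℝ).2
      ((tendsto_measureReal_le_atBot hZ).comp (tendsto_id.const_mul_atBot hκ))
  have hbound := (hX a ha).add ((hZκ.mul_isBigO (isBigO_refl _ _)).congr_right fun x => one_mul _)
  refine (IsBigO.of_bound' ?_).trans_isLittleO hbound
  filter_upwards [eventually_lt_atBot 0] with x hx
  rw [norm_of_nonneg measureReal_nonneg, norm_of_nonneg (by positivity), ← hprod x]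
  exact (measureReal_mono (hcover x hx)).trans (measureReal_union_le _ _)

end LowerTail

section Gaussian

variable {m : ℝ} {v : ℝ≥0}

lemma hasDerivAt_cdf_gaussianReal (hv : v ≠ 0) (x : ℝ) :
    HasDerivAt (cdf (gaussianReal m v)) (gaussianPDFReal m v x) x := by
  have hint := integrable_gaussianPDFReal m v
  have hcont : Continuous (gaussianPDFReal m v) := by
    rw [gaussianPDFReal_def]; fun_prop
  have hcdf : (cdf (gaussianReal m v) : ℝ → ℝ) = fun z =>
      (∫ t in Iic m, gaussianPDFReal m v t) + ∫ t in m..z, gaussianPDFReal m v t := by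
    funext z
    rw [← intervalIntegral.integral_Iic_sub_Iic hint.integrableOn hint.integrableOn,
      cdf_eq_real, measureReal_def, gaussianReal_apply_eq_integral _ hv, ENNReal.toReal_ofReal
      (integral_nonneg fun t => gaussianPDFReal_nonneg _ _ _), add_sub_cancel]
  rw [hcdf]
  exact (intervalIntegral.integral_hasDerivAt_right hint.intervalIntegrable
    (hcont.stronglyMeasurableAtFilter _ _) hcont.continuousAt).const_add _

lemma cdf_gaussianReal_pos (hv : v ≠ 0) (x : ℝ) : 0 < cdf (gaussianReal m v) x := by
  rw [cdf_eq_real]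
  refine measureReal_nonneg.lt_of_ne' ((measureReal_ne_zero_iff).2 fun hzero => ?_)
  simpa using gaussianReal_absolutelyContinuous' m hv hzero

lemma hasDerivAt_gaussianPDFReal (x : ℝ) :
    HasDerivAt (gaussianPDFReal m v) (-((x - m) / v) * gaussianPDFReal m v x) x := by
  have hexponent : HasDerivAt (fun x : ℝ => -(x - m) ^ 2 / (2 * v)) (-((x - m) / v)) x := by
    refine (((((hasDerivAt_id' x).sub_const m).pow 2).neg.div_const (2 * (v : ℝ)))).congr_deriv ?_
    rw [Nat.cast_ofNat, pow_one, mul_one, ← mul_neg, mul_div_mul_left _ _ two_ne_zero, neg_div]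
  rw [gaussianPDFReal_def]
  exact (hexponent.exp.const_mul _).congr_deriv (by ring)

lemma gaussianPDFReal_div (hv : v ≠ 0) (x y : ℝ) :
    gaussianPDFReal m v y / gaussianPDFReal m v x =
      rexp (-((y - m) ^ 2 - (x - m) ^ 2) / (2 * v)) := by
  rw [gaussianPDFReal_def, mul_div_mul_left _ _ (by positivity), ← Real.exp_sub]
  ring_nf

lemma tendsto_sub_const_sq_atBot (m : ℝ) : Tendsto (fun x : ℝ => (x - m) ^ 2) atBot atTop := by
  have hsub : Tendsto (fun x : ℝ => x - m) atBot atBot :=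
    tendsto_atBot_add_const_right _ (-m) tendsto_id
  simpa only [sq] using hsub.atBot_mul_atBot₀ hsub

lemma tendsto_gaussianPDFReal_atBot (hv : v ≠ 0) :
    Tendsto (gaussianPDFReal m v) atBot (𝓝 0) := by
  have hv' : (0 : ℝ) < 2 * v := by positivity
  have hexponent : Tendsto (fun x : ℝ => -(x - m) ^ 2 / (2 * v)) atBot atBot :=
    (tendsto_neg_atTop_atBot.comp (tendsto_sub_const_sq_atBot m)).atBot_div_const hv'
  rw [gaussianPDFReal_def]
  simpa using (tendsto_exp_atBot.comp hexponent).const_mul (√(2 * π * v))⁻¹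

theorem isEquivalent_cdf_gaussianReal_atBot (hv : v ≠ 0) :
    cdf (gaussianReal m v) ~[atBot] fun x => v * gaussianPDFReal m v x / (m - x) := by
  have hv' : (0 : ℝ) < v := by positivity
  have hpdf : ∀ x, 0 < gaussianPDFReal m v x := fun x => gaussianPDFReal_pos m v x hv
  have hneg : ∀ᶠ x in atBot, 0 < m - x := by
    filter_upwards [eventually_lt_atBot m] with x hx using sub_pos.2 hx
  have htop : Tendsto (fun x : ℝ => m - x) atBot atTop :=
    tendsto_atTop_add_const_left _ m tendsto_neg_atBot_atTop
  refine (isEquivalent_iff_tendsto_one (hneg.mono fun x hx => ?_)).2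
    (HasDerivAt.lhopital_zero_atBot (f' := gaussianPDFReal m v)
      (g' := fun x => gaussianPDFReal m v x * (1 + v * ((x - m) ^ 2)⁻¹))
      (Eventually.of_forall (hasDerivAt_cdf_gaussianReal hv)) (hneg.mono fun x hx => ?_)
      (Eventually.of_forall fun x => (mul_pos (hpdf x) (by positivity)).ne')
      (tendsto_cdf_atBot _) ?_ ?_)
  · exact (div_pos (mul_pos hv' (hpdf x)) hx).ne'
  · refine (((hasDerivAt_gaussianPDFReal x).const_mul (v : ℝ)).fun_div
      ((hasDerivAt_id x).const_sub m) hx.ne').congr_deriv ?_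
    have hx' : x - m ≠ 0 := by linarith
    have hmx : m - x ≠ 0 := hx.ne'
    simp only [id]
    field_simp
    ring
  · simpa using ((tendsto_gaussianPDFReal_atBot hv).const_mul (v : ℝ)).div_atTop htop
  · have hlim : Tendsto (fun x : ℝ => (1 + v * ((x - m) ^ 2)⁻¹)⁻¹) atBot (𝓝 1) := by
      simpa using (((tendsto_sub_const_sq_atBot m).inv_tendsto_atTop.const_mul (v : ℝ)).const_add
        1).inv₀ (by simp)
    refine hlim.congr fun x => ?_
    rw [div_mul_cancel_left₀ (hpdf x).ne']

section MovingThresholds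

variable {ι : Type*} {l : Filter ι} {u w : ι → ℝ}

lemma tendsto_div_one_of_tendsto_sq_sub_sq {c : ℝ} (hu : Tendsto u l atBot)
    (hw : Tendsto w l atBot) (hc : Tendsto (fun i => w i ^ 2 - u i ^ 2) l (𝓝 c)) :
    Tendsto (fun i => u i / w i) l (𝓝 1) := by
  have hlim := (hc.div_atTop (hw.atBot_mul_atBot₀ (hw.atBot_add_atBot hu))).const_sub 1
  rw [sub_zero] at hlim
  refine hlim.congr' ?_
  filter_upwards [hu.eventually_lt_atBot 0, hw.eventually_lt_atBot 0] with i hui hwi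
  have hsum : w i + u i ≠ 0 := by linarith
  have hne := hwi.ne
  field_simp
  ring

lemma isEquivalent_cdf_gaussianReal_div (hv : v ≠ 0) (hu : Tendsto u l atBot)
    (hw : Tendsto w l atBot) :
    (fun i => cdf (gaussianReal m v) (w i) / cdf (gaussianReal m v) (u i)) ~[l]
      fun i => rexp (-((w i - m) ^ 2 - (u i - m) ^ 2) / (2 * v)) * ((u i - m) / (w i - m)) := by
  have hmills := isEquivalent_cdf_gaussianReal_atBot (m := m) hv
  refine ((hmills.comp_tendsto hw).div (hmills.comp_tendsto hu)).congr_right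
    (Eventually.of_forall fun i => ?_)
  have hv' : (v : ℝ) ≠ 0 := by positivity
  simp only [Pi.div_apply, Function.comp_apply]
  rw [← gaussianPDFReal_div hv, ← neg_sub m (u i), ← neg_sub m (w i), neg_div_neg_eq,
    div_div_div_comm, mul_div_mul_left _ _ hv', div_div_eq_mul_div, mul_div_assoc]

lemma tendsto_cdf_gaussianReal_div {c : ℝ} (hv : v ≠ 0) (hu : Tendsto u l atBot)
    (hw : Tendsto w l atBot)
    (hc : Tendsto (fun i => (w i - m) ^ 2 - (u i - m) ^ 2) l (𝓝 c)) :
    Tendsto (fun i => cdf (gaussianReal m v) (w i) / cdf (gaussianReal m v) (u i)) l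
      (𝓝 (rexp (-c / (2 * v)))) := by
  have hratio : Tendsto (fun i => (u i - m) / (w i - m)) l (𝓝 1) :=
    tendsto_div_one_of_tendsto_sq_sub_sq (tendsto_atBot_add_const_right _ (-m) hu)
      (tendsto_atBot_add_const_right _ (-m) hw) hc
  refine (isEquivalent_cdf_gaussianReal_div hv hu hw).symm.tendsto_nhds ?_
  simpa using ((hc.neg.div_const (2 * (v : ℝ))).rexp).mul hratio

lemma tendsto_cdf_gaussianReal_div_zero (hv : v ≠ 0) (hu : Tendsto u l atBot)
    (hw : Tendsto w l atBot)
    (hdiff : Tendsto (fun i => (w i - m) ^ 2 - (u i - m) ^ 2) l atTop) :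
    Tendsto (fun i => cdf (gaussianReal m v) (w i) / cdf (gaussianReal m v) (u i)) l (𝓝 0) := by
  have hv' : (0 : ℝ) < 2 * v := by positivity
  have hexp : Tendsto (fun i => rexp (-((w i - m) ^ 2 - (u i - m) ^ 2) / (2 * v))) l (𝓝 0) :=
    tendsto_exp_atBot.comp ((tendsto_neg_atTop_atBot.comp hdiff).atBot_div_const hv')
  refine (isEquivalent_cdf_gaussianReal_div hv hu hw).symm.tendsto_nhds
    (hexp.zero_mul_isBoundedUnder_le ?_)
  refine isBoundedUnder_of_eventually_le (a := 1) ?_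
  filter_upwards [hdiff.eventually_ge_atTop 0] with i hi
  simp only [Function.comp_apply, Real.norm_eq_abs, abs_div]
  exact div_le_one_of_le₀ (sq_le_sq.1 (sub_nonneg.1 hi)) (abs_nonneg _)

end MovingThresholds

lemma isLittleO_cdf_gaussianReal_const_mul (hv : v ≠ 0) {a : ℝ} (ha : 1 < a) :
    (fun x => cdf (gaussianReal m v) (a * x)) =o[atBot] cdf (gaussianReal m v) := by
  refine (isLittleO_iff_tendsto fun x hx => absurd hx (cdf_gaussianReal_pos hv x).ne').2
    (tendsto_cdf_gaussianReal_div_zero hv tendsto_id (tendsto_id.const_mul_atBot (by linarith)) ?_)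
  have hlin : Tendsto (fun x : ℝ => (a + 1) * x + -(2 * m)) atBot atBot :=
    tendsto_atBot_add_const_right _ _ (tendsto_id.const_mul_atBot (by linarith))
  refine ((tendsto_id.const_mul_atBot (sub_pos.2 ha)).atBot_mul_atBot₀ hlin).congr fun x => ?_
  simp only [id]
  ring

instance isNegInvariant_gaussianReal_zero : (gaussianReal 0 v).IsNegInvariant :=
  ⟨by rw [Measure.neg_def, gaussianReal_map_neg, neg_zero]⟩

lemma hasLaw_mul_add_sqrt_mul {Ω : Type*} [MeasurableSpace Ω] {μ : Measure Ω} {X Y : Ω → ℝ}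
    {ρ : ℝ} (hρ : ρ ∈ Icc (-1) 1) (hX : HasLaw X (gaussianReal 0 v) μ)
    (hY : HasLaw Y (gaussianReal 0 v) μ) (hindep : IndepFun X Y μ) :
    HasLaw (fun ω => ρ * X ω + √(1 - ρ ^ 2) * Y ω) (gaussianReal 0 v) μ := by
  have hvar : (0 : ℝ) ≤ 1 - ρ ^ 2 := by nlinarith [hρ.1, hρ.2]
  have hρX := gaussianReal_const_mul hX ρ
  have hsY := gaussianReal_const_mul hY √(1 - ρ ^ 2)
  refine ⟨hρX.aemeasurable.add hsY.aemeasurable, (gaussianReal_add_gaussianReal_of_indepFun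
    (hindep.comp (measurable_const_mul ρ) (measurable_const_mul √(1 - ρ ^ 2)))
    hρX.map_eq hsY.map_eq).trans ?_⟩
  congr 1
  · simp
  · ext
    simp only [NNReal.coe_add, NNReal.coe_mul, NNReal.coe_mk, Real.sq_sqrt hvar]
    ring

end Gaussian

section Exponent

variable {f : ℝ → ℝ}

lemma isLittleO_sub_of_tendsto_deriv_div (hf : ∀ᶠ x in atBot, DifferentiableAt ℝ f x)
    (hf' : Tendsto (fun x => deriv f x / x) atBot (𝓝 0)) :
    (fun p : ℝ × ℝ => f p.1 - f p.2) =o[atBot ×ˢ atBot] fun p => p.1 ^ 2 - p.2 ^ 2 := by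
  refine isLittleO_iff.2 fun c hc => ?_
  have hsmall : ∀ᶠ x in atBot, |deriv f x / x| < c :=
    hf'.abs.eventually_lt_const (by rwa [abs_zero])
  obtain ⟨x₀, hx₀⟩ := eventually_atBot.1 (hf.and (hsmall.and (eventually_lt_atBot 0)))
  have hslope : ∀ x z, x < z → z ≤ x₀ → |f z - f x| ≤ c * |z ^ 2 - x ^ 2| := by
    intro x z hxz hz
    obtain ⟨ξ, hξ, hmean⟩ := exists_ratio_deriv_eq_ratio_slope f hxz
      (fun t ht => (hx₀ t (ht.2.trans hz)).1.continuousAt.continuousWithinAt)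
      (fun t ht => (hx₀ t (ht.2.le.trans hz)).1.differentiableWithinAt)
      (fun t => t ^ 2) (by fun_prop) (by fun_prop)
    obtain ⟨-, hratio, hneg⟩ := hx₀ ξ (hξ.2.le.trans hz)
    rw [deriv_pow_field, Nat.cast_ofNat, Nat.add_one_sub_one, pow_one] at hmean
    rw [abs_div, div_lt_iff₀ (abs_pos.2 hneg.ne)] at hratio
    have habs : |z ^ 2 - x ^ 2| * |deriv f ξ| = |f z - f x| * (2 * |ξ|) := by
      rw [← abs_mul, hmean, abs_mul, abs_mul, abs_two]
    nlinarith [mul_le_mul_of_nonneg_left hratio.le (abs_nonneg (z ^ 2 - x ^ 2)),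
      abs_pos.2 hneg.ne, abs_nonneg (f z - f x)]
  filter_upwards [(eventually_le_atBot x₀).prod_mk (eventually_le_atBot x₀)] with p hp
  rw [Real.norm_eq_abs, Real.norm_eq_abs]
  rcases lt_trichotomy p.1 p.2 with hlt | heq | hgt
  · rw [abs_sub_comm, abs_sub_comm (p.1 ^ 2)]
    exact hslope _ _ hlt hp.2
  · simp [heq]
  · exact hslope _ _ hgt hp.1

variable {b : ℝ}

lemma tendsto_mul_sq_add_atBot (hb : 0 < b) (hf : ∀ᶠ x in atBot, DifferentiableAt ℝ f x)
    (hf' : Tendsto (fun x => deriv f x / x) atBot (𝓝 0)) :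
    Tendsto (fun x => b * x ^ 2 + f x) atBot atTop := by
  obtain ⟨z, hz⟩ := ((isLittleO_sub_of_tendsto_deriv_div hf hf').bound (half_pos hb)).curry.exists
  have hsq : Tendsto (fun x : ℝ => x ^ 2) atBot atTop := by
    simpa only [sub_zero] using tendsto_sub_const_sq_atBot 0
  refine tendsto_atTop_mono' _ ?_
    (tendsto_atTop_add_const_right _ (f z + b / 2 * z ^ 2) (hsq.const_mul_atTop (half_pos hb)))
  filter_upwards [hz, hsq.eventually_ge_atTop (z ^ 2)] with x hx hxz
  rw [norm_sub_rev, norm_sub_rev (z ^ 2), Real.norm_of_nonneg (sub_nonneg.2 hxz)] at hx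
  linarith [neg_le_of_abs_le hx]

lemma tendsto_sq_sub_sq_of_tendsto_exponent {ι : Type*} {l : Filter ι} {u w : ι → ℝ} {L : ℝ}
    (hb : b ≠ 0) (hf : ∀ᶠ x in atBot, DifferentiableAt ℝ f x)
    (hf' : Tendsto (fun x => deriv f x / x) atBot (𝓝 0)) (hu : Tendsto u l atBot)
    (hw : Tendsto w l atBot)
    (hL : Tendsto (fun i => (b * w i ^ 2 + f (w i)) - (b * u i ^ 2 + f (u i))) l (𝓝 L)) :
    Tendsto (fun i => w i ^ 2 - u i ^ 2) l (𝓝 (L / b)) := by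
  have hfo : (fun i => f (w i) - f (u i)) =o[l] fun i => b * (w i ^ 2 - u i ^ 2) :=
    (isLittleO_const_mul_right_iff hb).2
      ((isLittleO_sub_of_tendsto_deriv_div hf hf').comp_tendsto (hw.prodMk hu))
  have hlim : Tendsto (fun i => b * (w i ^ 2 - u i ^ 2)) l (𝓝 L) := by
    refine (IsEquivalent.refl.add_isLittleO hfo).tendsto_nhds (hL.congr fun i => ?_)
    simp only [Pi.add_apply]
    ring
  simpa only [mul_div_cancel_left₀ _ hb] using hlim.div_const b

end Exponent

/-- The generalized inverse `sup {x | h x ≤ c}` of a monotone function `h`. It takes the junk value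
`0` when `h` stays above `c` or never exceeds it. -/
noncomputable def genInv (h : ℝ → ℝ) (c : ℝ) : ℝ := sSup {x | h x ≤ c}

section GenInv

variable {h : ℝ → ℝ} {c x : ℝ}

lemma le_genInv (hh : Monotone h) (hc : ∃ z, c < h z) (hx : h x ≤ c) : x ≤ genInv h c := by
  obtain ⟨z, hz⟩ := hc
  exact le_csSup ⟨z, fun _ ht => (hh.reflect_lt (lt_of_le_of_lt ht hz)).le⟩ hx

lemma le_of_lt_genInv (hh : Monotone h) (hc : ∃ z, h z ≤ c) (hx : x < genInv h c) : h x ≤ c := by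
  obtain ⟨z, hz, hxz⟩ := exists_lt_of_lt_csSup hc hx
  exact (hh hxz.le).trans hz

lemma tendsto_genInv_atBot (hh : Monotone h) (hbot : Tendsto h atBot atBot) :
    Tendsto (genInv h) atBot atBot := by
  refine tendsto_atBot.2 fun M => ?_
  filter_upwards [eventually_lt_atBot (h M)] with c hc
  exact csSup_le (hbot.eventually_le_atBot c).exists
    fun x hx => (hh.reflect_lt (lt_of_le_of_lt hx hc)).le

lemma measureReal_setOf_le_eq_cdf_genInv {ν : Measure ℝ} [IsProbabilityMeasure ν]
    [NullSingletonClass ν] (hh : Monotone h) (hlow : ∃ z, h z ≤ c) (hhigh : ∃ z, c < h z) :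
    ν.real {x | h x ≤ c} = cdf ν (genInv h c) := by
  rw [cdf_eq_real]
  have hIic : {x | h x ≤ c} ⊆ Iic (genInv h c) := fun x hx => le_genInv hh hhigh hx
  have hIio : Iio (genInv h c) ⊆ {x | h x ≤ c} := fun x hx => le_of_lt_genInv hh hlow hx
  refine (measureReal_mono hIic).antisymm ?_
  rw [← measureReal_congr Iio_ae_eq_Iic]
  exact measureReal_mono hIio

lemma abs_exponent_genInv_sub_log_le {q r : ℝ → ℝ} {ε x₀ y : ℝ} (hh : Monotone h)
    (hlow : ∃ z, h z ≤ -y) (hhigh : ∃ z, -y < h z) (hy : 0 < y)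
    (hrep : ∀ x ≤ x₀, h x = -rexp (q x + r x)) (hr : ∀ x ≤ x₀, |r x| ≤ ε)
    (hx₀ : genInv h (-y) < x₀) (hq : ContinuousAt q (genInv h (-y))) :
    |q (genInv h (-y)) - Real.log y| ≤ ε := by
  -- `h` may jump at its generalized inverse, so only the one-sided bounds pass to the limit.
  have hleft : ∀ᶠ x in 𝓝[<] genInv h (-y), Real.log y - ε ≤ q x := by
    filter_upwards [self_mem_nhdsWithin] with x (hx : x < _)
    have hxle := le_of_lt_genInv hh hlow hx
    rw [hrep x (hx.trans hx₀).le, neg_le_neg_iff, ← Real.log_le_iff_le_exp hy] at hxle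
    linarith [le_of_abs_le (hr x (hx.trans hx₀).le)]
  have hright : ∀ᶠ x in 𝓝[>] genInv h (-y), q x ≤ Real.log y + ε := by
    filter_upwards [Ioo_mem_nhdsGT hx₀] with x hx
    have hxlt : -y < h x := lt_of_not_ge fun hle => (le_genInv hh hhigh hle).not_gt hx.1
    rw [hrep x hx.2.le, neg_lt_neg_iff, ← Real.lt_log_iff_exp_lt hy] at hxlt
    linarith [neg_le_of_abs_le (hr x hx.2.le)]
  rw [abs_sub_le_iff]
  constructor
  · linarith [le_of_tendsto (hq.tendsto.mono_left nhdsWithin_le_nhds) hright]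
  · linarith [ge_of_tendsto (hq.tendsto.mono_left nhdsWithin_le_nhds) hleft]

lemma tendsto_exponent_genInv_sub_log {q r : ℝ → ℝ} (hh : Monotone h)
    (hbot : Tendsto h atBot atBot) (hq : ∀ᶠ x in atBot, ContinuousAt q x)
    (hr : Tendsto r atBot (𝓝 0)) (hrep : ∀ᶠ x in atBot, h x = -rexp (q x + r x)) :
    Tendsto (fun y => q (genInv h (-y)) - Real.log y) atTop (𝓝 0) := by
  have hW : Tendsto (fun y => genInv h (-y)) atTop atBot :=
    (tendsto_genInv_atBot hh hbot).comp tendsto_neg_atTop_atBot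
  refine Metric.nhds_basis_closedBall.tendsto_right_iff.2 fun ε hε => ?_
  have hrε : ∀ᶠ x in atBot, |r x| ≤ ε := by
    filter_upwards [hr (Metric.closedBall_mem_nhds 0 hε)] with x hx
    simpa using hx
  obtain ⟨x₀, hx₀⟩ := eventually_atBot.1 (hrep.and hrε)
  filter_upwards [hW.eventually hq, hW.eventually_lt_atBot x₀, eventually_gt_atTop 0,
    eventually_gt_atTop (-h 0)] with y hqy hWy hy hy0
  rw [mem_closedBall_zero_iff]
  exact abs_exponent_genInv_sub_log_le hh (hbot.eventually_le_atBot (-y)).exists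
    ⟨0, by linarith⟩ hy (fun x hx => (hx₀ x hx).1) (fun x hx => (hx₀ x hx).2) hWy hqy

end GenInv

lemma eventually_measureReal_setOf_gt_le {ν : Measure ℝ} [IsFiniteMeasure ν] [ν.IsNegInvariant]
    {h : ℝ → ℝ} (hh : Monotone h) (hneg : ∀ᶠ x in atBot, h x < 0)
    (hsmall : Tendsto (fun x => h x / h (-x)) atTop (𝓝 0)) {K : ℝ} (hK : 0 < K) :
    ∀ᶠ y in atTop, ν.real {x | y < h x} ≤ ν.real {x | h x ≤ -(K * y)} := by
  have hfar : ∀ᶠ x in atTop, h (-x) < 0 ∧ |h x / h (-x)| < K⁻¹ :=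
    (tendsto_neg_atTop_atBot.eventually hneg).and
      (hsmall.abs.eventually_lt_const (by rwa [abs_zero, inv_pos]))
  obtain ⟨x₀, hx₀⟩ := eventually_atTop.1 hfar
  filter_upwards [eventually_ge_atTop (h x₀)] with y hy
  have hsubset : {x | y < h x} ⊆ Neg.neg ⁻¹' {x | h x ≤ -(K * y)} := by
    intro x (hx : y < h x)
    obtain ⟨hnegx, hratio⟩ := hx₀ x (hh.reflect_lt (hy.trans_lt hx)).le
    rw [abs_div, abs_of_neg hnegx, div_lt_iff₀ (neg_pos.2 hnegx), inv_mul_eq_div,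
      lt_div_iff₀ hK] at hratio
    have : K * y ≤ |h x| * K := by
      rw [mul_comm]; gcongr; exact hx.le.trans (le_abs_self _)
    exact show h (-x) ≤ -(K * y) by linarith
  calc ν.real {x | y < h x} ≤ ν.real (Neg.neg ⁻¹' {x | h x ≤ -(K * y)}) := measureReal_mono hsubset
    _ = ν.real {x | h x ≤ -(K * y)} := congrArg ENNReal.toReal (Measure.measure_preimage_neg ν _)

/-- Condition [A₋] with parameter `b`: `h x = -exp (b x² + f x + r x)` near `-∞`, where
`f'(x) = o(x)` and `r` vanishes at `-∞`. Only the behaviour of `f` near `-∞` matters, so `f` is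
required to be differentiable only there. -/
def ConditionAMinus (b : ℝ) (h : ℝ → ℝ) : Prop :=
  ∃ f r : ℝ → ℝ, (∀ᶠ x in atBot, DifferentiableAt ℝ f x) ∧
    Tendsto (fun x => deriv f x / x) atBot (𝓝 0) ∧ Tendsto r atBot (𝓝 0) ∧
      ∀ᶠ x in atBot, h x = -rexp (b * x ^ 2 + f x + r x)

namespace ConditionAMinus

variable {b : ℝ} {h : ℝ → ℝ}

lemma eventually_neg (hA : ConditionAMinus b h) : ∀ᶠ x in atBot, h x < 0 := by
  obtain ⟨f, r, -, -, -, hrep⟩ := hA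
  filter_upwards [hrep] with x hx
  exact hx ▸ neg_neg_of_pos (exp_pos _)

lemma tendsto_atBot (hA : ConditionAMinus b h) (hb : 0 < b) : Tendsto h atBot atBot := by
  obtain ⟨f, r, hf, hf', hr, hrep⟩ := hA
  exact (tendsto_neg_atTop_atBot.comp (tendsto_exp_atTop.comp
    ((tendsto_mul_sq_add_atBot hb hf hf').atTop_add hr))).congr' (hrep.mono fun x hx => hx.symm)

lemma tendsto_genInv_neg (hA : ConditionAMinus b h) (hb : 0 < b) (hh : Monotone h) :
    Tendsto (fun y => genInv h (-y)) atTop atBot :=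
  (tendsto_genInv_atBot hh (hA.tendsto_atBot hb)).comp tendsto_neg_atTop_atBot

lemma eventually_measureReal_eq_cdf_genInv (hA : ConditionAMinus b h) (hb : 0 < b)
    (hh : Monotone h) (ν : Measure ℝ) [IsProbabilityMeasure ν] [NullSingletonClass ν] :
    ∀ᶠ y in atTop, ν.real {x | h x ≤ -y} = cdf ν (genInv h (-y)) := by
  filter_upwards [eventually_gt_atTop (-h 0)] with y hy
  exact measureReal_setOf_le_eq_cdf_genInv hh
    ((hA.tendsto_atBot hb).eventually_le_atBot (-y)).exists ⟨0, by linarith⟩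

lemma tendsto_genInv_sq_sub_sq (hA : ConditionAMinus b h) (hb : 0 < b) (hh : Monotone h) {l : ℝ}
    (hl : 0 < l) :
    Tendsto (fun y => genInv h (-(l * y)) ^ 2 - genInv h (-y) ^ 2) atTop
      (𝓝 (Real.log l / b)) := by
  have hbot := hA.tendsto_atBot hb
  have hW := hA.tendsto_genInv_neg hb hh
  obtain ⟨f, r, hf, hf', hr, hrep⟩ := hA
  have hly : Tendsto (fun y : ℝ => l * y) atTop atTop := tendsto_id.const_mul_atTop hl
  have hlog := tendsto_exponent_genInv_sub_log (q := fun x => b * x ^ 2 + f x) hh hbot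
    (hf.mono fun x hx => ContinuousAt.add (by fun_prop) hx.continuousAt) hr hrep
  refine tendsto_sq_sub_sq_of_tendsto_exponent hb.ne' hf hf' hW (hW.comp hly) ?_
  have hdiff := ((hlog.comp hly).sub hlog).add_const (Real.log l)
  rw [sub_zero, zero_add] at hdiff
  refine hdiff.congr' ?_
  filter_upwards [eventually_gt_atTop 0] with y hy
  simp only [Function.comp_apply, Real.log_mul hl.ne' hy.ne']
  ring

theorem isRegularlyVarying_gaussianReal (hA : ConditionAMinus b h) (hb : 0 < b)
    (hh : Monotone h) {v : ℝ≥0} (hv : v ≠ 0) :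
    IsRegularlyVarying (fun y => (gaussianReal 0 v).real {x | h x ≤ -y}) (-(1 / (2 * b * v))) := by
  have := nullSingletonClass_gaussianReal (μ := 0) hv
  have hcdf := hA.eventually_measureReal_eq_cdf_genInv hb hh (gaussianReal 0 v)
  refine ⟨hcdf.mono fun y hy => hy ▸ cdf_gaussianReal_pos hv _, fun l hl => ?_⟩
  have hly : Tendsto (fun y : ℝ => l * y) atTop atTop := tendsto_id.const_mul_atTop hl
  have hW := hA.tendsto_genInv_neg hb hh
  have hratio := tendsto_cdf_gaussianReal_div (m := 0) hv hW (hW.comp hly)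
    (by simpa only [sub_zero, Function.comp_apply] using hA.tendsto_genInv_sq_sub_sq hb hh hl)
  have hindex : rexp (-(Real.log l / b) / (2 * v)) = l ^ (-(1 / (2 * b * v))) := by
    rw [rpow_def_of_pos hl]
    congr 1
    field_simp
  rw [hindex] at hratio
  refine hratio.congr' ?_
  filter_upwards [hcdf, hly.eventually hcdf] with y hy hy'
  rw [hy, hy', Function.comp_apply]

lemma isLittleO_gaussianReal_gt (hA : ConditionAMinus b h) (hb : 0 < b) (hh : Monotone h)
    (hsmall : Tendsto (fun x => h x / h (-x)) atTop (𝓝 0)) {v : ℝ≥0} (hv : v ≠ 0) :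
    (fun y => (gaussianReal 0 v).real {x | y < h x}) =o[atTop]
      fun y => (gaussianReal 0 v).real {x | h x ≤ -y} :=
  (hA.isRegularlyVarying_gaussianReal hb hh hv).isLittleO_of_eventually_le
    (neg_neg_of_pos (by positivity)) (fun _ => measureReal_nonneg) fun _ hK =>
      eventually_measureReal_setOf_gt_le hh hA.eventually_neg hsmall hK

end ConditionAMinus

section GaussianPair

variable {Ω : Type*} [MeasurableSpace Ω] {μ : Measure Ω} {v : ℝ≥0} {X Y Z : Ω → ℝ}
  {h : ℝ → ℝ} {b : ℝ}

lemma measureReal_comp_le_eq {ν : Measure ℝ} (hX : HasLaw X ν μ) (hh : Monotone h) (c : ℝ) :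
    μ.real {ω | h (X ω) ≤ c} = ν.real {x | h x ≤ c} :=
  hX.measureReal_eq (measurableSet_le hh.measurable measurable_const)

lemma isLittleO_measureReal_gaussian_joint_le_atBot {ρ : ℝ} (hv : v ≠ 0) (hρ : ρ < 1)
    (hX : HasLaw X (gaussianReal 0 v) μ) (hZ : AEMeasurable Z μ) (hindep : IndepFun X Z μ) :
    (fun x => μ.real {ω | X ω ≤ x ∧ ρ * X ω + √(1 - ρ ^ 2) * Z ω ≤ x}) =o[atBot]
      cdf (gaussianReal 0 v) := by
  have := hX.isProbabilityMeasure
  simpa only [measureReal_le_eq_cdf hX] using isLittleO_measureReal_joint_le_atBot hρ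
    (Real.sqrt_nonneg _) hZ hindep fun a ha => by
      simpa only [measureReal_le_eq_cdf hX] using isLittleO_cdf_gaussianReal_const_mul hv ha

lemma isLittleO_measureReal_comp_joint_le [IsFiniteMeasure μ] (hv : v ≠ 0)
    (hjoint : (fun x => μ.real {ω | X ω ≤ x ∧ Y ω ≤ x}) =o[atBot] cdf (gaussianReal 0 v))
    (hh : Monotone h) (hb : 0 < b) (hA : ConditionAMinus b h) :
    (fun y => μ.real {ω | h (X ω) ≤ -y ∧ h (Y ω) ≤ -y}) =o[atTop]
      fun y => (gaussianReal 0 v).real {x | h x ≤ -y} := by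
  have := nullSingletonClass_gaussianReal (μ := 0) hv
  have hcdf := hA.eventually_measureReal_eq_cdf_genInv hb hh (gaussianReal 0 v)
  refine IsBigO.trans_isLittleO (.of_bound' ?_) ((hjoint.comp_tendsto
    (hA.tendsto_genInv_neg hb hh)).congr' .rfl (hcdf.mono fun _ hy => hy.symm))
  filter_upwards [eventually_gt_atTop (-h 0)] with y hy
  have hhigh : ∃ z, -y < h z := ⟨0, by linarith⟩
  rw [Function.comp_apply, norm_of_nonneg measureReal_nonneg, norm_of_nonneg measureReal_nonneg]
  exact measureReal_mono fun ω hω => ⟨le_genInv hh hhigh hω.1, le_genInv hh hhigh hω.2⟩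

theorem isEquivalent_measureReal_gaussian_increment_gt (hv : v ≠ 0)
    (hX : HasLaw X (gaussianReal 0 v) μ) (hY : HasLaw Y (gaussianReal 0 v) μ)
    (hjoint : (fun x => μ.real {ω | X ω ≤ x ∧ Y ω ≤ x}) =o[atBot] cdf (gaussianReal 0 v))
    (hh : Monotone h) (hb : 0 < b) (hA : ConditionAMinus b h)
    (hsmall : Tendsto (fun x => h x / h (-x)) atTop (𝓝 0)) :
    (fun y => μ.real {ω | h (Y ω) - h (X ω) > y}) ~[atTop]
      fun y => (gaussianReal 0 v).real {x | h x ≤ -y} := by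
  have := hX.isProbabilityMeasure
  have hF := hA.isRegularlyVarying_gaussianReal hb hh hv
  have hright : (fun y => μ.real {ω | y < h (Y ω)}) =o[atTop]
      fun y => (gaussianReal 0 v).real {x | h x ≤ -y} :=
    (hA.isLittleO_gaussianReal_gt hb hh hsmall hv).congr_left fun y =>
      (hY.measureReal_eq (measurableSet_lt measurable_const hh.measurable)).symm
  have hleft := isLittleO_measureReal_comp_joint_le hv hjoint hh hb hA
  simp only [← measureReal_comp_le_eq hX hh] at hF hright hleft ⊢
  exact isEquivalent_measureReal_increment_gt hF hright hleft

end GaussianPair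

theorem increment_right_tail_asymptotics_left_condition_general
    {Ω : Type*} [MeasurableSpace Ω] {μ : Measure Ω} {σ ρ : ℝ} (hσ : σ ≠ 0)
    (hρ : ρ ∈ Ico (-1 : ℝ) 1) {Z₁ Z₂ : Ω → ℝ}
    (hZ₁ : HasLaw Z₁ (gaussianReal 0 1) μ) (hZ₂ : HasLaw Z₂ (gaussianReal 0 1) μ)
    (hindep : IndepFun Z₁ Z₂ μ) {h : ℝ → ℝ} (hh : Monotone h) {b : ℝ} (hb : 0 < b)
    (hA : ConditionAMinus b h) (hsmall : Tendsto (fun x => h x / h (-x)) atTop (𝓝 0)) :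
    Tendsto
      (fun y => μ.real {ω | h (σ * (ρ * Z₁ ω + √(1 - ρ ^ 2) * Z₂ ω)) - h (σ * Z₁ ω) > y} /
        μ.real {ω | h (σ * (ρ * Z₁ ω + √(1 - ρ ^ 2) * Z₂ ω)) ≤ -y}) atTop (𝓝 1) ∧
    ∀ l : ℝ, 0 < l →
      Tendsto
        (fun y => μ.real {ω | h (σ * (ρ * Z₁ ω + √(1 - ρ ^ 2) * Z₂ ω)) - h (σ * Z₁ ω) > l * y} /
          μ.real {ω | h (σ * (ρ * Z₁ ω + √(1 - ρ ^ 2) * Z₂ ω)) - h (σ * Z₁ ω) > y})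
        atTop (𝓝 (l ^ (-(1 / (2 * b * σ ^ 2))))) := by
  set v : ℝ≥0 := .mk (σ ^ 2) (sq_nonneg σ)
  have hv : v ≠ 0 := NNReal.coe_ne_zero.1 (pow_ne_zero 2 hσ)
  have hX : HasLaw (fun ω => σ * Z₁ ω) (gaussianReal 0 v) μ := by
    simpa [v] using gaussianReal_const_mul hZ₁ σ
  have hZ : HasLaw (fun ω => σ * Z₂ ω) (gaussianReal 0 v) μ := by
    simpa [v] using gaussianReal_const_mul hZ₂ σ
  have hXZ : IndepFun (fun ω => σ * Z₁ ω) (fun ω => σ * Z₂ ω) μ :=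
    hindep.comp (measurable_const_mul σ) (measurable_const_mul σ)
  have hrot : ∀ ω, σ * (ρ * Z₁ ω + √(1 - ρ ^ 2) * Z₂ ω) =
      ρ * (σ * Z₁ ω) + √(1 - ρ ^ 2) * (σ * Z₂ ω) := fun ω => by ring
  simp only [hrot]
  have hY := hasLaw_mul_add_sqrt_mul (Ico_subset_Icc_self hρ) hX hZ hXZ
  have hequiv := isEquivalent_measureReal_gaussian_increment_gt hv hX hY
    (isLittleO_measureReal_gaussian_joint_le_atBot hv hρ.2 hX hZ.aemeasurable hXZ) hh hb hA hsmall
  have hF := hA.isRegularlyVarying_gaussianReal hb hh hv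
  refine ⟨?_, (hF.congr_isEquivalent hequiv).tendsto_div⟩
  simp only [measureReal_comp_le_eq hY hh]
  exact (isEquivalent_iff_tendsto_one (hF.eventually_pos.mono fun _ hy => hy.ne')).1 hequiv

/-- For a centred bivariate Gaussian pair `(X_s, X_t)` with common
variance `σ²` and correlation `ρ ∈ (0,1)` (built from independent standard Gaussians
`Z₁, Z₂`), if `h` is strictly increasing, continuous, satisfies [A₋] with parameter
`b > 0` and `h(x)/h(-x) → 0` as `x → ∞`, then
`P(h(X_t) - h(X_s) > y) / P(h(X_t) ≤ -y) → 1`; in particular the right tail of the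
increment is regularly varying with the same index `-β₋ = -1/(2bσ²)` as the left tail
of the distribution of `h(X_t)`. -/
theorem increment_right_tail_asymptotics_left_condition
    {Ω : Type*} [MeasurableSpace Ω] (μ : Measure Ω) [IsProbabilityMeasure μ]
    (σ ρ : ℝ) (hσ : 0 < σ) (hρ : ρ ∈ Set.Ioo (0 : ℝ) 1)
    (Z₁ Z₂ : Ω → ℝ) (hZ₁meas : Measurable Z₁) (hZ₂meas : Measurable Z₂)
    (hZ₁law : μ.map Z₁ = gaussianReal 0 1) (hZ₂law : μ.map Z₂ = gaussianReal 0 1)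
    (hindep : IndepFun Z₁ Z₂ μ)
    (Xs Xt : Ω → ℝ)
    (hXs : Xs = fun ω => σ * Z₁ ω)
    (hXt : Xt = fun ω => σ * (ρ * Z₁ ω + Real.sqrt (1 - ρ ^ 2) * Z₂ ω))
    (h : ℝ → ℝ) (hmono : StrictMono h) (hcont : Continuous h)
    (b : ℝ) (hb : 0 < b)
    (f r : ℝ → ℝ)
    (hf : Differentiable ℝ f)
    (hf' : Tendsto (fun x => deriv f x / x) atBot (nhds 0))
    (hr : Tendsto r atBot (nhds 0))
    (hrep : ∀ᶠ x in atBot, h x = -Real.exp (b * x ^ 2 + f x + r x))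
    (hsmall : Tendsto (fun x => h x / h (-x)) atTop (nhds 0)) :
    Tendsto
      (fun y => (μ {ω | h (Xt ω) - h (Xs ω) > y}).toReal / (μ {ω | h (Xt ω) ≤ -y}).toReal)
      atTop (nhds 1) ∧
    ∀ l : ℝ, 0 < l →
      Tendsto
        (fun y =>
          (μ {ω | h (Xt ω) - h (Xs ω) > l * y}).toReal /
            (μ {ω | h (Xt ω) - h (Xs ω) > y}).toReal)
        atTop (nhds (l ^ (-(1 / (2 * b * σ ^ 2))))) := by
  subst hXs hXt
  exact increment_right_tail_asymptotics_left_condition_general hσ.ne'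
    ⟨by linarith [hρ.1], hρ.2⟩ ⟨hZ₁meas.aemeasurable, hZ₁law⟩ ⟨hZ₂meas.aemeasurable, hZ₂law⟩
    hindep hmono.monotone hb ⟨f, r, .of_forall hf, hf', hr, hrep⟩ hsmall
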